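/- arXiv:2102.01474 — 2 statements merged into one kernel-verified Lean document; each statement's English description precedes it below -/
import Mathlib

section
/- Let Φ : ℂⁿ → ℝ be a strictly plurisubharmonic quadratic form. For every N ∈ ℝ there exists C > 0 such that for every entire function u : ℂⁿ → ℂ one has sup_{z ∈ ℂⁿ} ⟨z⟩^{n+N} |u(z)| e^{-Φ(z)} ≤ C · (∫_{ℂⁿ} |u(w)|² ⟨w⟩^{2(N+2n)} e^{-2Φ(w)} dL(w))^{1/2}. -/
open Matrix MeasureTheory ENNReal

noncomputable section

/-- The squared Euclidean norm `|z|²` on `ℂⁿ`. -/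
def eSq {n : ℕ} (z : Fin n → ℂ) : ℝ := ∑ i, Complex.normSq (z i)

/-- The Japanese bracket `⟨z⟩ = (1 + |z|²)^{1/2}`. -/
def jb {n : ℕ} (z : Fin n → ℂ) : ℝ := Real.sqrt (1 + eSq z)

/-- `Φ : ℂⁿ → ℝ` is a (real) quadratic form of the underlying real coordinates. -/
def IsRQuad {n : ℕ} (Φ : (Fin n → ℂ) → ℝ) : Prop :=
  ∃ B : (Fin n → ℂ) →ₗ[ℝ] (Fin n → ℂ) →ₗ[ℝ] ℝ, ∀ z, Φ z = B z z

/-- `Φ : ℂⁿ → ℝ` is a strictly plurisubharmonic quadratic form.  For a quadratic form `Φ`,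
the Levi form satisfies `(∂²_{z z̄}Φ) w ⋅ w̄ = (Φ(w) + Φ(i w))/2`, so positive definiteness of
the Levi matrix is equivalent to `Φ(w) + Φ(i·w) > 0` for all `w ≠ 0`. -/
def IsSPSH {n : ℕ} (Φ : (Fin n → ℂ) → ℝ) : Prop :=
  IsRQuad Φ ∧ ∀ z : Fin n → ℂ, z ≠ 0 → 0 < Φ z + Φ (Complex.I • z)

/-- The squared weighted norm `‖u‖_s² = ∫ |u(z)|² ⟨z⟩^{2s} e^{-2Φ(z)} L(dz)` (in `ℝ≥0∞`). -/
def hnorm {n : ℕ} (Φ : (Fin n → ℂ) → ℝ) (s : ℝ) (u : (Fin n → ℂ) → ℂ) : ℝ≥0∞ :=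
  ∫⁻ z : Fin n → ℂ, (‖u z‖₊ : ℝ≥0∞) ^ 2 * ENNReal.ofReal (jb z ^ (2 * s) * Real.exp (-2 * Φ z))

/-- A conic subset of `ℂⁿ`. -/
def IsConic {n : ℕ} (V : Set (Fin n → ℂ)) : Prop := ∀ z ∈ V, ∀ t : ℝ, 0 < t → t • z ∈ V

/-- The `1/2`-Gelfand–Shilov wavefront set of `u` relative to `Φ`: the complement in
`ℂⁿ∖{0}` of the points having an open conic neighborhood in `ℂⁿ∖{0}` on which
`|u(z)| ≤ C e^{Φ(z) - c|z|²}`. -/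
def wf {n : ℕ} (Φ : (Fin n → ℂ) → ℝ) (u : (Fin n → ℂ) → ℂ) : Set (Fin n → ℂ) :=
  {z₀ | z₀ ≠ 0 ∧ ¬ ∃ V : Set (Fin n → ℂ), IsOpen V ∧ IsConic V ∧ (0 : Fin n → ℂ) ∉ V ∧ z₀ ∈ V ∧
      ∃ C c : ℝ, 0 < C ∧ 0 < c ∧ ∀ z ∈ V, ‖u z‖ ≤ C * Real.exp (Φ z - c * eSq z)}

/-- A holomorphic quadratic form on `ℂ^{2n} = ℂⁿ_z × ℂⁿ_θ`. -/
def IsCQuad2 {n : ℕ} (Ψ : (Fin n → ℂ) → (Fin n → ℂ) → ℂ) : Prop :=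
  ∃ B : ((Fin n → ℂ) × (Fin n → ℂ)) →ₗ[ℂ] ((Fin n → ℂ) × (Fin n → ℂ)) →ₗ[ℂ] ℂ,
    ∀ z θ, Ψ z θ = B (z, θ) (z, θ)

/-- A real quadratic form on `ℂⁿ × ℂⁿ` viewed as a real vector space. -/
def IsRQuadPair {n : ℕ} (R : (Fin n → ℂ) → (Fin n → ℂ) → ℝ) : Prop :=
  ∃ B : ((Fin n → ℂ) × (Fin n → ℂ)) →ₗ[ℝ] ((Fin n → ℂ) × (Fin n → ℂ)) →ₗ[ℝ] ℝ,
    ∀ z w, R z w = B (z, w) (z, w)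

/-- The Bergman-form integral operator
`G u (z) = a ∫ e^{2Ψ(z, w̄)} u(w) e^{-2Φ(w)} L(dw)`. -/
def berg {n : ℕ} (a : ℂ) (Ψ : (Fin n → ℂ) → (Fin n → ℂ) → ℂ) (Φ : (Fin n → ℂ) → ℝ)
    (u : (Fin n → ℂ) → ℂ) (z : Fin n → ℂ) : ℂ :=
  a * ∫ w : Fin n → ℂ, Complex.exp (2 * Ψ z (star w)) * u w * (Real.exp (-2 * Φ w) : ℂ)

open Metric Set Real

/-! On a unit ball the weight `e^{-Φ} ⟨z⟩^s` is comparable, uniformly in the centre,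
to the modulus of a nowhere vanishing holomorphic function `e^{-g}`: the first-order Taylor term of
a real quadratic form is the real part of a complex linear functional, the second-order term is
bounded on the ball, and `log ⟨z⟩` is Lipschitz. So the mean value inequality for the holomorphic
function `e^{-g} u`, combined with Hölder's inequality, bounds `⟨z⟩^s e^{-Φ(z)} |u(z)|` by the
weighted `L²` norm of `u` over the unit ball about `z`. The mean value inequality in several
variables comes from the one on circles, by averaging over the rotations `w ↦ c + e^{iθ} (w - c)`,
which preserve Lebesgue measure. -/

section MeanValue

variable {E F : Type*} [NormedAddCommGroup E] [NormedSpace ℂ E]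
  [NormedAddCommGroup F] [NormedSpace ℂ F] {c : E} {r : ℝ}

lemma diffContOnCl_comp_complex_line {v : E → F} (hv : DifferentiableOn ℂ v (ball c r))
    {w : E} (hw : w ∈ ball c r) :
    DiffContOnCl ℂ (fun t : ℂ ↦ v (c + t • (w - c))) (ball 0 1) := by
  refine DifferentiableOn.diffContOnCl_ball (U := closedBall 0 1) ?_ Subset.rfl
  refine hv.comp (f := fun t : ℂ ↦ c + t • (w - c)) (by fun_prop) fun t ht ↦ ?_
  rw [mem_closedBall_zero_iff] at ht
  rw [mem_ball_iff_norm] at hw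
  rw [mem_ball_iff_norm, add_sub_cancel_left, norm_smul]
  exact (mul_le_of_le_one_left (norm_nonneg _) ht).trans_lt hw

lemma ofReal_two_pi_mul_enorm_le_lintegral_circleMap [CompleteSpace F] {f : ℂ → F} {a : ℂ} {R : ℝ}
    (hf : DiffContOnCl ℂ f (ball a |R|)) :
    ENNReal.ofReal (2 * π) * ‖f a‖ₑ ≤ ∫⁻ θ in Ioc 0 (2 * π), ‖f (circleMap a R θ)‖ₑ := by
  have mean_value : ∫ θ in Ioc 0 (2 * π), f (circleMap a R θ) = (2 * π) • f a := by
    rw [← intervalIntegral.integral_of_le two_pi_pos.le, ← hf.circleAverage,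
      Real.circleAverage_def, smul_inv_smul₀ two_pi_pos.ne']
  calc ENNReal.ofReal (2 * π) * ‖f a‖ₑ
      = ‖∫ θ in Ioc 0 (2 * π), f (circleMap a R θ)‖ₑ := by
        rw [mean_value, enorm_smul, Real.enorm_of_nonneg two_pi_pos.le]
    _ ≤ _ := enorm_integral_le_lintegral_enorm _

lemma measurePreserving_isometryEquiv {E : Type*} [NormedAddCommGroup E] [NormedSpace ℝ E]
    [FiniteDimensional ℝ E] [MeasurableSpace E] [BorelSpace E] (μ : Measure E)
    [μ.IsAddHaarMeasure] (e : E ≃ᵢ E) : MeasurePreserving e μ μ := by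
  -- Hausdorff measure is itself a Haar measure, and visibly invariant under isometries.
  rw [Measure.isAddLeftInvariant_eq_smul μ (Measure.hausdorffMeasure (Module.finrank ℝ E))]
  exact (e.measurePreserving_hausdorffMeasure _).smul_measure _

variable [FiniteDimensional ℂ E] [MeasurableSpace E] [BorelSpace E]
  (μ : Measure E) [μ.IsAddHaarMeasure]

lemma measurePreserving_rotation (c : E) (a : Circle) :
    MeasurePreserving (fun w ↦ c + a • (w - c)) μ μ := by
  have : IsIsometricSMul Circle E :=
    ⟨fun b ↦ Isometry.of_dist_eq fun x y ↦ by
      simp [Circle.smul_def, dist_smul₀, Circle.norm_coe]⟩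
  exact measurePreserving_isometryEquiv μ
    (((IsometryEquiv.subRight c).trans (IsometryEquiv.constSMul a)).trans
      (IsometryEquiv.addLeft c))

lemma lintegral_lintegral_rotation (c : E) {f : E → ℝ≥0∞} (hf : Measurable f) :
    ∫⁻ w, (∫⁻ θ in Ioc 0 (2 * π), f (c + circleMap 0 1 θ • (w - c))) ∂μ =
      ENNReal.ofReal (2 * π) * ∫⁻ w, f w ∂μ := by
  have : ProperSpace E := FiniteDimensional.proper_rclike ℂ E
  have rotation_continuous : Continuous fun q : E × ℝ ↦
      c + circleMap 0 1 q.2 • (q.1 - c) := by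
    have := continuous_circleMap 0 1
    fun_prop
  have rotate (θ : ℝ) : ∫⁻ w, f (c + circleMap 0 1 θ • (w - c)) ∂μ =
      ∫⁻ w, f w ∂μ := by
    simpa [circleMap, Circle.smul_def] using
      (measurePreserving_rotation μ c (Circle.exp θ)).lintegral_comp hf
  have integrand_measurable : Measurable (Function.uncurry fun w θ ↦
      f (c + circleMap 0 1 θ • (w - c))) := hf.comp rotation_continuous.measurable
  rw [lintegral_lintegral_swap integrand_measurable.aemeasurable]
  simp_rw [rotate]
  rw [setLIntegral_const, Real.volume_Ioc, sub_zero, mul_comm]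

variable [CompleteSpace F] {p : ℝ≥0∞}

theorem measure_ball_mul_enorm_le_lintegral {v : E → F} (hv : DifferentiableOn ℂ v (ball c r)) :
    μ (ball c r) * ‖v c‖ₑ ≤ ∫⁻ w in ball c r, ‖v w‖ₑ ∂μ := by
  set f : E → ℝ≥0∞ := (ball c r).indicator fun w ↦ ‖v w‖ₑ
  have f_measurable : Measurable f := by
    classical
    simp only [f, ← piecewise_eq_indicator]
    exact hv.continuousOn.enorm.measurable_piecewise continuousOn_const measurableSet_ball
  have two_pi_ne_zero : ENNReal.ofReal (2 * π) ≠ 0 := by simpa using pi_pos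
  rw [← ENNReal.mul_le_mul_iff_right two_pi_ne_zero ENNReal.ofReal_ne_top]
  calc ENNReal.ofReal (2 * π) * (μ (ball c r) * ‖v c‖ₑ)
      = ∫⁻ _ in ball c r, ENNReal.ofReal (2 * π) * ‖v c‖ₑ ∂μ := by
        rw [setLIntegral_const]; ring
    _ ≤ ∫⁻ w in ball c r,
          (∫⁻ θ in Ioc 0 (2 * π), f (c + circleMap 0 1 θ • (w - c))) ∂μ := by
        refine setLIntegral_mono' measurableSet_ball fun w hw ↦ ?_
        have orbit (θ : ℝ) : c + circleMap 0 1 θ • (w - c) ∈ ball c r := by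
          rw [mem_ball_iff_norm] at hw ⊢
          simpa [norm_smul] using hw
        have slice : DiffContOnCl ℂ (fun t : ℂ ↦ v (c + t • (w - c))) (ball 0 |1|) := by
          simpa only [abs_one] using diffContOnCl_comp_complex_line hv hw
        simpa [f, orbit] using ofReal_two_pi_mul_enorm_le_lintegral_circleMap slice
    _ ≤ ∫⁻ w, (∫⁻ θ in Ioc 0 (2 * π), f (c + circleMap 0 1 θ • (w - c))) ∂μ :=
        setLIntegral_le_lintegral _ _
    _ = ENNReal.ofReal (2 * π) * ∫⁻ w in ball c r, ‖v w‖ₑ ∂μ := by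
        rw [lintegral_lintegral_rotation μ c f_measurable,
          lintegral_indicator measurableSet_ball]

theorem measure_ball_rpow_mul_enorm_le_eLpNorm (hp : 1 ≤ p) (hr : 0 < r) {v : E → F}
    (hv : DifferentiableOn ℂ v (ball c r)) :
    μ (ball c r) ^ (1 / p.toReal) * ‖v c‖ₑ ≤ eLpNorm v p (μ.restrict (ball c r)) := by
  have : ProperSpace E := FiniteDimensional.proper_rclike ℂ E
  have ball_ne_zero : μ (ball c r) ≠ 0 := (measure_ball_pos μ c hr).ne'
  have ball_ne_top : μ (ball c r) ≠ ⊤ := measure_ball_lt_top.ne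
  have holder := eLpNorm_le_eLpNorm_mul_rpow_measure_univ hp
    (hv.continuousOn.aestronglyMeasurable (μ := μ) measurableSet_ball)
  rw [eLpNorm_one_eq_lintegral_enorm, Measure.restrict_apply_univ, toReal_one, div_one] at holder
  rw [← ENNReal.mul_le_mul_iff_left
    (ENNReal.rpow_pos ball_ne_zero.bot_lt ball_ne_top).ne'
    (ENNReal.rpow_ne_top_of_ne_zero ball_ne_zero ball_ne_top)]
  calc μ (ball c r) ^ (1 / p.toReal) * ‖v c‖ₑ * μ (ball c r) ^ (1 - 1 / p.toReal)
      = μ (ball c r) * ‖v c‖ₑ := by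
        rw [mul_right_comm, ← ENNReal.rpow_add _ _ ball_ne_zero ball_ne_top, add_sub_cancel,
          ENNReal.rpow_one]
    _ ≤ ∫⁻ w in ball c r, ‖v w‖ₑ ∂μ := measure_ball_mul_enorm_le_lintegral μ hv
    _ ≤ _ := holder

theorem measure_ball_rpow_mul_enorm_exp_smul_le_eLpNorm (hp : 1 ≤ p) (hr : 0 < r) {u : E → F}
    (hu : DifferentiableOn ℂ u (ball c r)) {φ : E → ℝ} {g : E → ℂ} {M : ℝ}
    (hg : DifferentiableOn ℂ g (ball c r))
    (hφ : ∀ w ∈ ball c r, φ w ≤ φ c + (g w - g c).re + M) :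
    μ (ball c r) ^ (1 / p.toReal) * ‖exp (-φ c) • u c‖ₑ ≤
      ENNReal.ofReal (exp M) *
        eLpNorm (fun w ↦ exp (-φ w) • u w) p (μ.restrict (ball c r)) := by
  set v : E → F := fun w ↦ exp (-φ c) • Complex.exp (-(g w - g c)) • u w
  have v_differentiable : DifferentiableOn ℂ v (ball c r) :=
    ((hg.sub_const _).neg.cexp.smul hu).const_smul _
  have norm_v_le : ∀ w ∈ ball c r, ‖v w‖ ≤ exp M * ‖exp (-φ w) • u w‖ := fun w hw ↦ by
    simp only [v, norm_smul, Complex.norm_exp, Complex.neg_re, norm_of_nonneg (exp_nonneg _)]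
    rw [← mul_assoc, ← mul_assoc, ← exp_add, ← exp_add]
    exact mul_le_mul_of_nonneg_right (exp_le_exp.2 (by linarith [hφ w hw])) (norm_nonneg _)
  calc μ (ball c r) ^ (1 / p.toReal) * ‖exp (-φ c) • u c‖ₑ
      = μ (ball c r) ^ (1 / p.toReal) * ‖v c‖ₑ := by simp [v]
    _ ≤ eLpNorm v p (μ.restrict (ball c r)) :=
        measure_ball_rpow_mul_enorm_le_eLpNorm μ hp hr v_differentiable
    _ ≤ _ := eLpNorm_le_mul_eLpNorm_of_ae_le_mul
        (ae_restrict_of_forall_mem measurableSet_ball norm_v_le) p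

end MeanValue

section PluriharmonicMajorants

variable {E F : Type*} [NormedAddCommGroup E] [NormedSpace ℂ E]
  [NormedAddCommGroup F] [NormedSpace ℂ F] {φ ψ : E → ℝ}

/-- On every unit ball `φ` is dominated, up to an additive constant that does not depend on the
centre, by the real part of a holomorphic function with the same value at the centre. This is what
a weight `e^{-φ}` needs for sub-mean-value estimates on unit balls to hold uniformly. -/
def HasPluriharmonicMajorants (φ : E → ℝ) : Prop :=
  ∃ M : ℝ, ∀ z, ∃ g : E → ℂ, DifferentiableOn ℂ g (ball z 1) ∧
    ∀ w ∈ ball z 1, φ w ≤ φ z + (g w - g z).re + M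

namespace HasPluriharmonicMajorants

theorem add_lipschitz (hφ : HasPluriharmonicMajorants φ) {K : NNReal} (hψ : LipschitzWith K ψ) :
    HasPluriharmonicMajorants fun z ↦ φ z + ψ z := by
  obtain ⟨M, hM⟩ := hφ
  refine ⟨M + K, fun z ↦ ?_⟩
  obtain ⟨g, hg, hφg⟩ := hM z
  refine ⟨g, hg, fun w hw ↦ ?_⟩
  have : (K : ℝ) * dist w z ≤ K := mul_le_of_le_one_right K.2 (mem_ball.1 hw).le
  linarith [hφg w hw, hψ.le_add_mul w z]

theorem exists_enorm_exp_smul_le_eLpNorm [FiniteDimensional ℂ E] [CompleteSpace F]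
    [MeasurableSpace E] [BorelSpace E] (hφ : HasPluriharmonicMajorants φ) (μ : Measure E)
    [μ.IsAddHaarMeasure] {p : ℝ≥0∞} (hp : 1 ≤ p) :
    ∃ C : ℝ, 0 < C ∧ ∀ u : E → F, Differentiable ℂ u → ∀ z,
      ‖exp (-φ z) • u z‖ₑ ≤ ENNReal.ofReal C * eLpNorm (fun w ↦ exp (-φ w) • u w) p μ := by
  obtain ⟨M, hM⟩ := hφ
  have : ProperSpace E := FiniteDimensional.proper_rclike ℂ E
  set V : ℝ≥0∞ := μ (ball 0 1) ^ (1 / p.toReal)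
  have ball_pos : 0 < μ (ball (0 : E) 1) := measure_ball_pos μ 0 one_pos
  have V_ne_zero : V ≠ 0 := (ENNReal.rpow_pos ball_pos measure_ball_lt_top.ne).ne'
  have V_ne_top : V ≠ ⊤ := ENNReal.rpow_ne_top_of_ne_zero ball_pos.ne' measure_ball_lt_top.ne
  have V_pos : 0 < V.toReal := ENNReal.toReal_pos V_ne_zero V_ne_top
  refine ⟨exp M / V.toReal, by positivity, fun u hu z ↦ ?_⟩
  obtain ⟨g, hg, hφg⟩ := hM z
  have local_bound := measure_ball_rpow_mul_enorm_exp_smul_le_eLpNorm μ hp one_pos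
    hu.differentiableOn hg hφg
  rw [Measure.addHaar_ball_center] at local_bound
  rw [ENNReal.ofReal_div_of_pos V_pos, ENNReal.ofReal_toReal V_ne_top, ENNReal.mul_comm_div,
    ← mul_div_assoc, ENNReal.le_div_iff_mul_le (.inl V_ne_zero) (.inl V_ne_top), mul_comm]
  exact local_bound.trans (mul_le_mul_right (eLpNorm_restrict_le _ _ _ _) _)

end HasPluriharmonicMajorants

theorem hasPluriharmonicMajorants_bilin [NormedSpace ℝ E] [IsScalarTower ℝ ℂ E]
    (B : E →L[ℝ] E →L[ℝ] ℝ) : HasPluriharmonicMajorants fun z ↦ B z z := by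
  refine ⟨‖B‖, fun z ↦ ?_⟩
  set L : StrongDual ℂ E := StrongDual.extendRCLike (B z + B.flip z)
  refine ⟨L, L.differentiable.differentiableOn, fun w hw ↦ ?_⟩
  have taylor : B w w = B z z + (L w - L z).re + B (w - z) (w - z) := by
    have re_L (x : E) : (L x).re = B z x + B x z :=
      StrongDual.re_extendRCLike_apply (𝕜 := ℂ) (B z + B.flip z) x
    rw [Complex.sub_re, re_L, re_L]
    simp only [map_sub, _root_.sub_apply]
    ring
  have remainder : B (w - z) (w - z) ≤ ‖B‖ := by
    have : ‖w - z‖ ≤ 1 := (mem_ball_iff_norm.1 hw).le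
    calc B (w - z) (w - z) ≤ ‖B‖ * ‖w - z‖ * ‖w - z‖ :=
          (le_abs_self _).trans (B.le_opNorm₂ _ _)
      _ ≤ ‖B‖ * 1 * 1 := by gcongr
      _ = ‖B‖ := by ring
  linarith

end PluriharmonicMajorants

section JapaneseBracket

variable {G : Type*} [SeminormedAddCommGroup G] {n : ℕ}

theorem sqrt_one_add_norm_sq_le_mul (x y : G) :
    √(1 + ‖x‖ ^ 2) ≤ (1 + ‖x - y‖) * √(1 + ‖y‖ ^ 2) := by
  have triangle : ‖x‖ ≤ ‖x - y‖ + ‖y‖ := by simpa using norm_add_le (x - y) y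
  have hd := norm_nonneg (x - y)
  rw [Real.sqrt_le_left (by positivity), mul_pow, Real.sq_sqrt (by positivity)]
  calc 1 + ‖x‖ ^ 2 ≤ 1 + (‖x - y‖ + ‖y‖) ^ 2 := by gcongr
    _ ≤ (1 + ‖x - y‖) ^ 2 * (1 + ‖y‖ ^ 2) := by
        nlinarith [mul_nonneg hd (sq_nonneg (‖y‖ - 1)), mul_nonneg hd (sq_nonneg ‖y‖),
          sq_nonneg (‖x - y‖ * ‖y‖)]

theorem lipschitzWith_log_sqrt_one_add_norm_sq :
    LipschitzWith 1 fun x : G ↦ Real.log √(1 + ‖x‖ ^ 2) := by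
  refine LipschitzWith.of_le_add fun x y ↦ ?_
  have hd : 0 < 1 + ‖x - y‖ := by positivity
  calc Real.log √(1 + ‖x‖ ^ 2) ≤ Real.log ((1 + ‖x - y‖) * √(1 + ‖y‖ ^ 2)) :=
        Real.log_le_log (by positivity) (sqrt_one_add_norm_sq_le_mul x y)
    _ = Real.log (1 + ‖x - y‖) + Real.log √(1 + ‖y‖ ^ 2) := Real.log_mul hd.ne' (by positivity)
    _ ≤ Real.log √(1 + ‖y‖ ^ 2) + dist x y := by
        rw [dist_eq_norm]
        linarith [Real.log_le_sub_one_of_pos hd]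

lemma jb_eq_sqrt_one_add_norm_sq (z : Fin n → ℂ) : jb z = √(1 + ‖WithLp.toLp 2 z‖ ^ 2) := by
  simp [jb, eSq, EuclideanSpace.norm_sq_eq, Complex.normSq_eq_norm_sq]

lemma one_le_jb (z : Fin n → ℂ) : 1 ≤ jb z := by
  simp [jb_eq_sqrt_one_add_norm_sq, Real.one_le_sqrt]

lemma jb_pos (z : Fin n → ℂ) : 0 < jb z :=
  one_pos.trans_le (one_le_jb z)

lemma exists_lipschitzWith_const_mul_log_jb (s : ℝ) :
    ∃ K, LipschitzWith K fun z : Fin n → ℂ ↦ s * Real.log (jb z) := by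
  simp_rw [jb_eq_sqrt_one_add_norm_sq]
  exact ⟨_, (lipschitzWith_smul s).comp
    (lipschitzWith_log_sqrt_one_add_norm_sq.comp (PiLp.lipschitzWith_toLp 2 _))⟩

end JapaneseBracket

section WeightedNorm

variable {n : ℕ} {Φ : (Fin n → ℂ) → ℝ}

theorem IsRQuad.hasPluriharmonicMajorants (hΦ : IsRQuad Φ) : HasPluriharmonicMajorants Φ := by
  obtain ⟨B, hB⟩ := hΦ
  rw [funext hB]
  exact hasPluriharmonicMajorants_bilin B.toContinuousBilinearMap

lemma hnorm_mono (Φ : (Fin n → ℂ) → ℝ) (u : (Fin n → ℂ) → ℂ) : Monotone (hnorm Φ · u) := by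
  intro s t hst
  refine lintegral_mono fun w ↦ ?_
  gcongr
  exact one_le_jb w

lemma eLpNorm_two_eq_hnorm_rpow (Φ : (Fin n → ℂ) → ℝ) (s : ℝ) (u : (Fin n → ℂ) → ℂ) :
    eLpNorm (fun w ↦ (jb w ^ s * exp (-Φ w)) • u w) 2 volume = hnorm Φ s u ^ (1 / 2 : ℝ) := by
  rw [eLpNorm_eq_lintegral_rpow_enorm_toReal two_ne_zero ENNReal.ofNat_ne_top, hnorm]
  congr 2 with w
  have weight_nonneg : 0 ≤ jb w ^ s * exp (-Φ w) := by have := jb_pos w; positivity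
  have weight_sq : (jb w ^ s * exp (-Φ w)) ^ 2 = jb w ^ (2 * s) * exp (-2 * Φ w) := by
    rw [mul_pow, ← rpow_mul_natCast (jb_pos w).le, ← exp_nat_mul]
    congr 2 <;> push_cast <;> ring
  simp only [ENNReal.toReal_ofNat, ENNReal.rpow_ofNat]
  rw [enorm_smul, mul_pow, Real.enorm_of_nonneg weight_nonneg, ← ENNReal.ofReal_pow weight_nonneg,
    weight_sq, mul_comm]
  rfl

theorem stmt_1_general (hΦ : HasPluriharmonicMajorants Φ) (s : ℝ) :
    ∃ C : ℝ, 0 < C ∧ ∀ u : (Fin n → ℂ) → ℂ, Differentiable ℂ u → ∀ z : Fin n → ℂ,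
      ENNReal.ofReal (jb z ^ s * ‖u z‖ * exp (-Φ z)) ≤
        ENNReal.ofReal C * hnorm Φ s u ^ (1 / 2 : ℝ) := by
  obtain ⟨K, hK⟩ := exists_lipschitzWith_const_mul_log_jb (n := n) (-s)
  obtain ⟨C, hC, bound⟩ := (hΦ.add_lipschitz hK).exists_enorm_exp_smul_le_eLpNorm
    (F := ℂ) volume one_le_two
  have weight (w : Fin n → ℂ) : exp (-(Φ w + -s * Real.log (jb w))) = jb w ^ s * exp (-Φ w) := by
    rw [rpow_def_of_pos (jb_pos w), ← exp_add]
    ring_nf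
  simp only [weight, eLpNorm_two_eq_hnorm_rpow] at bound
  refine ⟨C, hC, fun u hu z ↦ ?_⟩
  have weight_nonneg : 0 ≤ jb z ^ s * exp (-Φ z) := by have := jb_pos z; positivity
  simpa only [← ofReal_norm, norm_smul, norm_of_nonneg weight_nonneg, mul_right_comm]
    using bound u hu z

end WeightedNorm

/-- For a strictly plurisubharmonic quadratic form `Φ` on `ℂⁿ` and every
`N ∈ ℝ` there is `C > 0` such that for every entire `u : ℂⁿ → ℂ` and every `z`,
`⟨z⟩^{n+N} |u(z)| e^{-Φ(z)} ≤ C (∫ |u(w)|² ⟨w⟩^{2(N+2n)} e^{-2Φ(w)} dL(w))^{1/2}`. -/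
theorem stmt_1 (n : ℕ) (hn : 1 ≤ n) (Φ : (Fin n → ℂ) → ℝ) (hΦ : IsSPSH Φ) (N : ℝ) :
    ∃ C : ℝ, 0 < C ∧ ∀ u : (Fin n → ℂ) → ℂ, Differentiable ℂ u → ∀ z : Fin n → ℂ,
      ENNReal.ofReal (jb z ^ ((n : ℝ) + N) * ‖u z‖ * Real.exp (-Φ z))
        ≤ ENNReal.ofReal C *
            (∫⁻ w : Fin n → ℂ,
              (‖u w‖₊ : ℝ≥0∞) ^ 2 *
                ENNReal.ofReal (jb w ^ (2 * (N + 2 * n)) * Real.exp (-2 * Φ w))) ^ (1 / 2 : ℝ) := by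
  obtain ⟨C, hC, bound⟩ := stmt_1_general hΦ.1.hasPluriharmonicMajorants (n + N)
  exact ⟨C, hC, fun u hu z ↦ (bound u hu z).trans (by
    gcongr; exact hnorm_mono Φ u (by linarith [n.cast_nonneg (α := ℝ)]))⟩
end
end

section
/- Let Φ, Φ̃ : ℂⁿ → ℝ be strictly plurisubharmonic quadratic forms with Φ̃ ≤ Φ pointwise, let κ♭ : ℂⁿ → ℂⁿ be an ℝ-linear isomorphism, let â ∈ ℂ, and let Ψ be a holomorphic quadratic form on ℂ^{2n} such that 2 Re Ψ(z, w̄) = Φ̃(z) + Φ(w) − R(z, w) for all z, w ∈ ℂⁿ, where R is a nonnegative quadratic form on ℂⁿ × ℂⁿ satisfying c|z − κ♭(w)|² ≤ R(z, w) ≤ C|z − κ♭(w)|² for some C, c > 0. Let u be an entire function with |u(w)| ≤ C₀⟨w⟩^{N} e^{Φ(w)} on ℂⁿ for some C₀ > 0, N ∈ ℝ, and set G u(z) = â ∫_{ℂⁿ} e^{2Ψ(z,w̄)} u(w) e^{-2Φ(w)} dL(w). Then WF^{1/2}_Φ(Gu) ⊆ κ♭(WF^{1/2}_Φ(u)) ∩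 Rad(Φ − Φ̃), where Rad(Φ − Φ̃) = {z ∈ ℂⁿ : Φ(z) − Φ̃(z) = 0}. -/
open Matrix MeasureTheory ENNReal

noncomputable section

/-!
Where `|u(w)| ≲ e^{Φ(w) - s(w)}`, the integrand of `Gu(z)` is `O(e^{Φ(z) - q(z, w)})` with
`q(z, w) = (Φ - Φ̃)(z) + c|z - κ w|² + s(w)`. So `z₀ ∉ WF(Gu)` as soon as
`q(z, w) ≥ ε(|z|² + |w|²)` for all `w` and all `z` in a conic neighborhood of `z₀`. Since `κ` is
invertible, `|z - κ w|²` together with either of `|z|²`, `|w|²` controls both, and the growth of `u`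
always allows `s(w) = -δ|w|²` with `δ` arbitrarily small.

If `(Φ - Φ̃)(z₀) > 0`, the term `(Φ - Φ̃)(z)` supplies the missing `|z|²`. If `κ⁻¹ z₀ ∉ WF(u)`, then
the Gaussian decay of `u` supplies `|w|²` for `w` in a conic neighborhood `V` of `κ⁻¹ z₀`, while
for `w ∉ V` and `z` in a narrow cone about `z₀` the vectors `z` and `κ w` point in separated
directions, so that `|z - κ w|² ≳ |z|²`.
-/

section Cone

variable {E : Type*} [NormedAddCommGroup E] [NormedSpace ℝ E]

lemma exists_isOpen_conic_subset_mul_norm_le_norm_sub {U : Set E} (hU : IsOpen U)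
    (hUc : ∀ x ∈ U, ∀ t : ℝ, 0 < t → t • x ∈ U) {x₀ : E} (hx₀ : x₀ ∈ U) :
    ∃ W ⊆ U, IsOpen W ∧ (∀ x ∈ W, ∀ t : ℝ, 0 < t → t • x ∈ W) ∧ x₀ ∈ W ∧
      ∃ η : ℝ, 0 < η ∧ ∀ x ∈ W, ∀ y ∉ U, η * ‖x‖ ≤ ‖x - y‖ := by
  obtain ⟨ρ, hρ, hball⟩ := Metric.isOpen_iff.mp hU x₀ hx₀
  have mem_of_smul_mem {x : E} {t : ℝ} (ht : 0 < t) (h : t • x ∈ U) : x ∈ U := by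
    simpa only [inv_smul_smul₀ ht.ne'] using hUc _ h t⁻¹ (inv_pos.mpr ht)
  refine ⟨{x | ∃ t : ℝ, 0 < t ∧ t • x ∈ Metric.ball x₀ (ρ / 2)}, ?_, ?_, ?_, ?_,
    ρ / 2 / (‖x₀‖ + ρ / 2), by positivity, ?_⟩
  · rintro x ⟨t, ht, htx⟩
    exact mem_of_smul_mem ht (hball (Metric.ball_subset_ball (half_le_self hρ.le) htx))
  · simp only [Set.ofPred_exists, Set.ofPred_and]
    exact isOpen_iUnion fun t ↦ isOpen_const.inter
      (Metric.isOpen_ball.preimage (continuous_const_smul t))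
  · rintro x ⟨t, ht, htx⟩ s hs
    exact ⟨t / s, by positivity, by rwa [smul_smul, div_mul_cancel₀ t hs.ne']⟩
  · exact ⟨1, one_pos, by simpa using hρ⟩
  · rintro x ⟨t, ht, htx⟩ y hy
    have hy_far : ρ ≤ ‖t • y - x₀‖ := by
      by_contra! h
      exact hy (mem_of_smul_mem ht (hball (mem_ball_iff_norm.mpr h)))
    have hx_near : ‖t • x - x₀‖ < ρ / 2 := mem_ball_iff_norm.mp htx
    have h_sub : ρ / 2 ≤ t * ‖x - y‖ := by
      rw [← norm_smul_of_nonneg ht.le, smul_sub]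
      linarith [norm_sub_le_norm_sub_add_norm_sub (t • y) (t • x) x₀,
        norm_sub_rev (t • y) (t • x)]
    have h_norm : t * ‖x‖ ≤ ‖x₀‖ + ρ / 2 := by
      rw [← norm_smul_of_nonneg ht.le]
      linarith [norm_le_norm_add_norm_sub' (t • x) x₀]
    refine le_of_mul_le_mul_left ?_ ht
    calc t * (ρ / 2 / (‖x₀‖ + ρ / 2) * ‖x‖)
        = ρ / 2 * (t * ‖x‖ / (‖x₀‖ + ρ / 2)) := by ring
      _ ≤ ρ / 2 * 1 := by gcongr; exact div_le_one_of_le₀ h_norm (by positivity)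
      _ ≤ t * ‖x - y‖ := by rwa [mul_one]

end Cone

section EuclideanSquare

variable {m n : ℕ}

lemma eSq_nonneg (z : Fin n → ℂ) : 0 ≤ eSq z :=
  Finset.sum_nonneg fun _ _ ↦ Complex.normSq_nonneg _

lemma eSq_zero : eSq (0 : Fin n → ℂ) = 0 := by simp [eSq]

lemma continuous_eSq : Continuous (eSq (n := n)) :=
  continuous_finsetSum _ fun i _ ↦ Complex.continuous_normSq.comp (continuous_apply i)

lemma eSq_smul (t : ℝ) (z : Fin n → ℂ) : eSq (t • z) = t ^ 2 * eSq z := by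
  simp only [eSq, Pi.smul_apply, Complex.real_smul, Complex.normSq_mul, Complex.normSq_ofReal,
    Finset.mul_sum, sq]

lemma eSq_add_le (x y : Fin n → ℂ) : eSq (x + y) ≤ 2 * (eSq x + eSq y) := by
  simp only [eSq, ← Finset.sum_add_distrib, Finset.mul_sum, Complex.normSq_eq_norm_sq]
  gcongr with i
  exact (pow_le_pow_left₀ (norm_nonneg _) (norm_add_le (x i) (y i)) 2).trans add_sq_le

lemma eSq_sub_comm (x y : Fin n → ℂ) : eSq (x - y) = eSq (y - x) := by
  simp only [eSq, Pi.sub_apply, Complex.normSq_eq_norm_sq, norm_sub_rev]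

lemma eSq_le_mul_norm_sq (z : Fin n → ℂ) : eSq z ≤ n * ‖z‖ ^ 2 := by
  calc eSq z ≤ ∑ _i : Fin n, ‖z‖ ^ 2 := Finset.sum_le_sum fun i _ ↦ by
        rw [Complex.normSq_eq_norm_sq]
        exact pow_le_pow_left₀ (norm_nonneg _) (norm_le_pi_norm z i) 2
    _ = n * ‖z‖ ^ 2 := by simp

lemma norm_sq_le_eSq (z : Fin n → ℂ) : ‖z‖ ^ 2 ≤ eSq z := by
  have h_coord (i : Fin n) : ‖z i‖ ^ 2 ≤ eSq z := by
    rw [← Complex.normSq_eq_norm_sq]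
    exact Finset.single_le_sum (f := fun i ↦ Complex.normSq (z i))
      (fun i _ ↦ Complex.normSq_nonneg _) (Finset.mem_univ i)
  refine (Real.le_sqrt (norm_nonneg z) (eSq_nonneg z)).mp ?_
  exact (pi_norm_le_iff_of_nonneg (Real.sqrt_nonneg _)).mpr
    fun i ↦ Real.le_sqrt_of_sq_le (h_coord i)

lemma exists_eSq_map_le (L : (Fin m → ℂ) →ₗ[ℝ] (Fin n → ℂ)) :
    ∃ M : ℝ, 0 < M ∧ ∀ w, eSq (L w) ≤ M * eSq w := by
  set T := LinearMap.toContinuousLinearMap L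
  refine ⟨n * ‖T‖ ^ 2 + 1, by positivity, fun w ↦ ?_⟩
  calc eSq (L w) ≤ n * ‖T w‖ ^ 2 := eSq_le_mul_norm_sq _
    _ ≤ n * (‖T‖ * ‖w‖) ^ 2 := by gcongr; exact T.le_opNorm w
    _ = n * ‖T‖ ^ 2 * ‖w‖ ^ 2 := by ring
    _ ≤ (n * ‖T‖ ^ 2 + 1) * eSq w := by gcongr; exacts [by linarith, norm_sq_le_eSq w]

lemma exists_mul_eSq_add_le_add_eSq_right (L : (Fin m → ℂ) →ₗ[ℝ] (Fin n → ℂ)) {c d : ℝ}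
    (hc : 0 < c) (hd : 0 < d) :
    ∃ ε : ℝ, 0 < ε ∧ ∀ z w, ε * (eSq z + eSq w) ≤ c * eSq (z - L w) + d * eSq w := by
  obtain ⟨M, hM, hL⟩ := exists_eSq_map_le L
  refine ⟨min c d / (2 * M + 2), by positivity, fun z w ↦ ?_⟩
  have hz : eSq z ≤ 2 * (eSq (z - L w) + M * eSq w) := by
    calc eSq z = eSq (z - L w + L w) := by rw [sub_add_cancel]
      _ ≤ 2 * (eSq (z - L w) + eSq (L w)) := eSq_add_le _ _
      _ ≤ 2 * (eSq (z - L w) + M * eSq w) := by gcongr; exact hL w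
  have h_sum : eSq z + eSq w ≤ (2 * M + 2) * (eSq (z - L w) + eSq w) := by
    nlinarith [eSq_nonneg (z - L w), eSq_nonneg w]
  calc min c d / (2 * M + 2) * (eSq z + eSq w)
      ≤ min c d / (2 * M + 2) * ((2 * M + 2) * (eSq (z - L w) + eSq w)) := by gcongr
    _ = min c d * eSq (z - L w) + min c d * eSq w := by field_simp
    _ ≤ c * eSq (z - L w) + d * eSq w := by
      gcongr
      exacts [eSq_nonneg _, min_le_left c d, eSq_nonneg _, min_le_right c d]

lemma exists_mul_eSq_add_le_add_eSq_left (κ : (Fin m → ℂ) ≃ₗ[ℝ] (Fin n → ℂ)) {c d : ℝ}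
    (hc : 0 < c) (hd : 0 < d) :
    ∃ ε : ℝ, 0 < ε ∧ ∀ z w, ε * (eSq z + eSq w) ≤ c * eSq (z - κ w) + d * eSq z := by
  obtain ⟨M, hM, hκ⟩ := exists_eSq_map_le κ.symm.toLinearMap
  obtain ⟨ε, hε, h⟩ := exists_mul_eSq_add_le_add_eSq_right κ.symm.toLinearMap
    (div_pos hc hM) hd
  refine ⟨ε, hε, fun z w ↦ ?_⟩
  have h_back : eSq (w - κ.symm z) ≤ M * eSq (z - κ w) := by
    rw [eSq_sub_comm z]
    simpa using hκ (κ w - z)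
  calc ε * (eSq z + eSq w) = ε * (eSq w + eSq z) := by rw [add_comm (eSq z)]
    _ ≤ c / M * eSq (w - κ.symm z) + d * eSq z := h w z
    _ ≤ c / M * (M * eSq (z - κ w)) + d * eSq z := by gcongr
    _ = c * eSq (z - κ w) + d * eSq z := by field_simp

lemma IsConic.exists_isOpen_subset_mul_eSq_le_eSq_sub {U : Set (Fin n → ℂ)} (hUc : IsConic U)
    (hU : IsOpen U) {z₀ : Fin n → ℂ} (hz₀ : z₀ ∈ U) :
    ∃ W ⊆ U, IsOpen W ∧ IsConic W ∧ z₀ ∈ W ∧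
      ∃ η : ℝ, 0 < η ∧ ∀ z ∈ W, ∀ y ∉ U, η * eSq z ≤ eSq (z - y) := by
  obtain ⟨W, hWU, hW, hWc, hz₀W, η, hη, hsep⟩ :=
    exists_isOpen_conic_subset_mul_norm_le_norm_sub hU hUc hz₀
  refine ⟨W, hWU, hW, hWc, hz₀W, η ^ 2 / (n + 1), by positivity, fun z hz y hy ↦ ?_⟩
  calc η ^ 2 / (n + 1) * eSq z ≤ η ^ 2 / (n + 1) * ((n + 1) * ‖z‖ ^ 2) := by
        gcongr
        exact (eSq_le_mul_norm_sq z).trans (by gcongr; linarith)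
    _ = (η * ‖z‖) ^ 2 := by field_simp
    _ ≤ ‖z - y‖ ^ 2 := by gcongr; exact hsep z hz y hy
    _ ≤ eSq (z - y) := norm_sq_le_eSq _

lemma IsConic.exists_isOpen_mul_eSq_add_le_of_notMem {V : Set (Fin m → ℂ)} (hVc : IsConic V)
    (κ : (Fin m → ℂ) ≃ₗ[ℝ] (Fin n → ℂ)) (hV : IsOpen V) {z₀ : Fin n → ℂ}
    (hz₀ : κ.symm z₀ ∈ V) {c : ℝ} (hc : 0 < c) :
    ∃ W ⊆ κ.symm ⁻¹' V, IsOpen W ∧ IsConic W ∧ z₀ ∈ W ∧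
      ∃ ε : ℝ, 0 < ε ∧ ∀ z ∈ W, ∀ w ∉ V, ε * (eSq z + eSq w) ≤ c * eSq (z - κ w) := by
  have hU : IsOpen (κ.symm ⁻¹' V) :=
    hV.preimage (LinearMap.continuous_of_finiteDimensional κ.symm.toLinearMap)
  have hUc : IsConic (κ.symm ⁻¹' V) := fun z hz t ht ↦ by
    simpa only [Set.mem_preimage, map_smul] using hVc _ hz t ht
  obtain ⟨W, hWU, hW, hWc, hz₀W, η, hη, hsep⟩ :=
    hUc.exists_isOpen_subset_mul_eSq_le_eSq_sub hU hz₀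
  obtain ⟨ε, hε, hcoer⟩ := exists_mul_eSq_add_le_add_eSq_left κ
    (half_pos hc) (mul_pos (half_pos hc) hη)
  refine ⟨W, hWU, hW, hWc, hz₀W, ε, hε, fun z hz w hw ↦ ?_⟩
  have h_sep : η * eSq z ≤ eSq (z - κ w) := hsep z hz (κ w) (by simpa using hw)
  calc ε * (eSq z + eSq w) ≤ c / 2 * eSq (z - κ w) + c / 2 * η * eSq z := hcoer z w
    _ = c / 2 * eSq (z - κ w) + c / 2 * (η * eSq z) := by ring
    _ ≤ c / 2 * eSq (z - κ w) + c / 2 * eSq (z - κ w) := by gcongr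
    _ = c * eSq (z - κ w) := by ring

lemma integrable_exp_neg_mul_eSq {ε : ℝ} (hε : 0 < ε) :
    Integrable fun w : Fin n → ℂ ↦ Real.exp (-ε * eSq w) := by
  have h_one_dim : Integrable fun w : ℂ ↦ Real.exp (-ε * ‖w‖ ^ 2) := by
    have h := (GaussianFourier.integrable_cexp_neg_mul_sq_norm_add (V := ℂ) (b := (ε : ℂ))
      (by simpa using hε) 0 0).norm
    simpa [Complex.norm_exp, ← Complex.ofReal_pow] using h
  have h_prod : Integrable fun w : Fin n → ℂ ↦ ∏ i, Real.exp (-ε * ‖w i‖ ^ 2) :=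
    Integrable.fintype_prod (f := fun _ (ζ : ℂ) ↦ Real.exp (-ε * ‖ζ‖ ^ 2)) fun _ ↦ h_one_dim
  simpa only [eSq, Complex.normSq_eq_norm_sq, Finset.mul_sum, Real.exp_sum] using h_prod

end EuclideanSquare

/-- `u` exceeds the weight `e^Φ` by at most a factor growing slower than every Gaussian:
`|u(w)| ≤ A_δ e^{Φ(w) + δ|w|²}` for every `δ > 0`. This weakens the polynomial bound
`|u(w)| ≤ C⟨w⟩^N e^{Φ(w)}`. -/
def HasSubgaussianExcess {n : ℕ} (Φ : (Fin n → ℂ) → ℝ) (u : (Fin n → ℂ) → ℂ) : Prop :=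
  ∀ δ : ℝ, 0 < δ → ∃ A : ℝ, 0 < A ∧ ∀ w, ‖u w‖ ≤ A * Real.exp (Φ w + δ * eSq w)

section Growth

variable {n : ℕ} {Φ : (Fin n → ℂ) → ℝ} {u : (Fin n → ℂ) → ℂ}

lemma exists_one_add_rpow_le_exp {p δ : ℝ} (hp : 0 < p) (hδ : 0 < δ) :
    ∃ A : ℝ, 0 < A ∧ ∀ s : ℝ, 0 ≤ s → (1 + s) ^ p ≤ A * Real.exp (δ * s) := by
  have hK : 0 < 1 + p / δ := by positivity
  refine ⟨(1 + p / δ) ^ p, by positivity, fun s hs ↦ ?_⟩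
  have h_base : 1 + s ≤ (1 + p / δ) * Real.exp (δ / p * s) := by
    calc 1 + s = 1 + p / δ * (δ / p * s) := by field_simp
      _ ≤ (1 + p / δ) * (δ / p * s + 1) := by
        have : 0 ≤ p / δ + δ / p * s := by positivity
        linarith
      _ ≤ (1 + p / δ) * Real.exp (δ / p * s) := by gcongr; exact Real.add_one_le_exp _
  calc (1 + s) ^ p ≤ ((1 + p / δ) * Real.exp (δ / p * s)) ^ p := by gcongr
    _ = (1 + p / δ) ^ p * Real.exp (δ * s) := by
      rw [Real.mul_rpow hK.le (Real.exp_pos _).le, ← Real.exp_mul]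
      congr 2
      field_simp

lemma exists_jb_rpow_le_exp (N : ℝ) {δ : ℝ} (hδ : 0 < δ) :
    ∃ A : ℝ, 0 < A ∧ ∀ w : Fin n → ℂ, jb w ^ N ≤ A * Real.exp (δ * eSq w) := by
  obtain ⟨A, hA, h⟩ := exists_one_add_rpow_le_exp (p := |N| + 1) (by positivity) hδ
  refine ⟨A, hA, fun w ↦ ?_⟩
  have hs : 0 ≤ eSq w := eSq_nonneg w
  calc jb w ^ N ≤ jb w ^ (2 * (|N| + 1)) :=
        Real.rpow_le_rpow_of_exponent_le (Real.one_le_sqrt.mpr (by linarith))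
          (by linarith [le_abs_self N, abs_nonneg N])
    _ = (1 + eSq w) ^ (|N| + 1) := by
      rw [jb, Real.rpow_mul (Real.sqrt_nonneg _), Real.rpow_two, Real.sq_sqrt (by linarith)]
    _ ≤ A * Real.exp (δ * eSq w) := h _ hs

lemma HasSubgaussianExcess.of_norm_le_jb_rpow {C N : ℝ} (hC : 0 < C)
    (hu : ∀ w, ‖u w‖ ≤ C * jb w ^ N * Real.exp (Φ w)) : HasSubgaussianExcess Φ u := by
  intro δ hδ
  obtain ⟨A, hA, hjb⟩ := exists_jb_rpow_le_exp (n := n) N hδ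
  refine ⟨C * A, by positivity, fun w ↦ ?_⟩
  calc ‖u w‖ ≤ C * jb w ^ N * Real.exp (Φ w) := hu w
    _ ≤ C * (A * Real.exp (δ * eSq w)) * Real.exp (Φ w) := by gcongr; exact hjb w
    _ = C * A * Real.exp (Φ w + δ * eSq w) := by rw [Real.exp_add]; ring

end Growth

section QuadraticForms

variable {n : ℕ}

lemma continuous_bilinear_apply_self {𝕜 E : Type*} [NontriviallyNormedField 𝕜] [CompleteSpace 𝕜]
    [NormedAddCommGroup E] [NormedSpace 𝕜 E] [FiniteDimensional 𝕜 E] (B : E →ₗ[𝕜] E →ₗ[𝕜] 𝕜) :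
    Continuous fun x ↦ B x x :=
  B.toContinuousBilinearMap.continuous.clm_apply continuous_id

lemma IsRQuad.continuous {Φ : (Fin n → ℂ) → ℝ} (hΦ : IsRQuad Φ) : Continuous Φ := by
  obtain ⟨B, hB⟩ := hΦ
  simpa only [← hB] using continuous_bilinear_apply_self B

lemma IsRQuad.map_smul {Φ : (Fin n → ℂ) → ℝ} (hΦ : IsRQuad Φ) (t : ℝ) (z : Fin n → ℂ) :
    Φ (t • z) = t ^ 2 * Φ z := by
  obtain ⟨B, hB⟩ := hΦ
  simp only [hB, _root_.map_smul, LinearMap.smul_apply, smul_eq_mul]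
  ring

lemma IsRQuad.map_zero {Φ : (Fin n → ℂ) → ℝ} (hΦ : IsRQuad Φ) : Φ 0 = 0 := by
  simpa using hΦ.map_smul 0 0

lemma IsCQuad2.continuous {Ψ : (Fin n → ℂ) → (Fin n → ℂ) → ℂ} (hΨ : IsCQuad2 Ψ) :
    Continuous fun p : (Fin n → ℂ) × (Fin n → ℂ) ↦ Ψ p.1 p.2 := by
  obtain ⟨B, hB⟩ := hΨ
  simpa only [hB] using continuous_bilinear_apply_self B

end QuadraticForms

/-- The integrand of `berg`: `e^{2Ψ(z, w̄)} u(w) e^{-2Φ(w)}`. -/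
def bergIntegrand {n : ℕ} (Ψ : (Fin n → ℂ) → (Fin n → ℂ) → ℂ) (Φ : (Fin n → ℂ) → ℝ)
    (u : (Fin n → ℂ) → ℂ) (z w : Fin n → ℂ) : ℂ :=
  Complex.exp (2 * Ψ z (star w)) * u w * (Real.exp (-2 * Φ w) : ℂ)

section Bergman

variable {n : ℕ} {Φ Φt : (Fin n → ℂ) → ℝ} {Ψ : (Fin n → ℂ) → (Fin n → ℂ) → ℂ}
  {u : (Fin n → ℂ) → ℂ} {κ : (Fin n → ℂ) ≃ₗ[ℝ] (Fin n → ℂ)} {a : ℂ} {c : ℝ}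

lemma norm_bergIntegrand_le {z w : Fin n → ℂ} {b r s A : ℝ}
    (hΨ : 2 * (Ψ z (star w)).re ≤ b + Φ w - r) (hu : ‖u w‖ ≤ A * Real.exp (Φ w + s)) :
    ‖bergIntegrand Ψ Φ u z w‖ ≤ A * Real.exp (b - r + s) := by
  have h_kernel : ‖Complex.exp (2 * Ψ z (star w))‖ ≤ Real.exp (b + Φ w - r) := by
    simpa [Complex.norm_exp] using hΨ
  rw [bergIntegrand, norm_mul, norm_mul, Complex.norm_of_nonneg (Real.exp_pos _).le]
  calc ‖Complex.exp (2 * Ψ z (star w))‖ * ‖u w‖ * Real.exp (-2 * Φ w)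
      ≤ Real.exp (b + Φ w - r) * (A * Real.exp (Φ w + s)) * Real.exp (-2 * Φ w) := by gcongr
    _ = A * (Real.exp (b + Φ w - r) * Real.exp (Φ w + s) * Real.exp (-2 * Φ w)) := by ring
    _ = A * Real.exp (b - r + s) := by
      rw [← Real.exp_add, ← Real.exp_add]
      ring_nf

lemma norm_berg_le {z : Fin n → ℂ} {A b ε : ℝ} (hε : 0 < ε)
    (h : ∀ w, ‖bergIntegrand Ψ Φ u z w‖ ≤ A * Real.exp (b - ε * eSq w)) :
    ‖berg a Ψ Φ u z‖ ≤ ‖a‖ * (A * ∫ w : Fin n → ℂ, Real.exp (-ε * eSq w)) * Real.exp b := by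
  have h_int : ‖∫ w, bergIntegrand Ψ Φ u z w‖ ≤
      ∫ w : Fin n → ℂ, A * Real.exp b * Real.exp (-ε * eSq w) := by
    refine norm_integral_le_of_norm_le ((integrable_exp_neg_mul_eSq hε).const_mul _)
      (.of_forall fun w ↦ (h w).trans_eq ?_)
    rw [mul_assoc, ← Real.exp_add, neg_mul, sub_eq_add_neg]
  calc ‖berg a Ψ Φ u z‖ = ‖a‖ * ‖∫ w, bergIntegrand Ψ Φ u z w‖ := norm_mul _ _
    _ ≤ ‖a‖ * (A * Real.exp b * ∫ w : Fin n → ℂ, Real.exp (-ε * eSq w)) := by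
      rw [← integral_const_mul]
      gcongr
    _ = ‖a‖ * (A * ∫ w : Fin n → ℂ, Real.exp (-ε * eSq w)) * Real.exp b := by ring

lemma notMem_wf_berg_of_norm_bergIntegrand_le {V : Set (Fin n → ℂ)} (hV : IsOpen V)
    (hVc : IsConic V) (hV0 : 0 ∉ V) {z₀ : Fin n → ℂ} (hz₀ : z₀ ∈ V) {A ε : ℝ} (hε : 0 < ε)
    (h : ∀ z ∈ V, ∀ w,
      ‖bergIntegrand Ψ Φ u z w‖ ≤ A * Real.exp (Φ z - ε * (eSq z + eSq w))) :
    z₀ ∉ wf Φ (berg a Ψ Φ u) := by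
  rintro ⟨-, hmem⟩
  refine hmem ⟨V, hV, hVc, hV0, hz₀,
    max 1 (‖a‖ * (A * ∫ w : Fin n → ℂ, Real.exp (-ε * eSq w))), ε, by positivity, hε,
    fun z hz ↦ ?_⟩
  refine (norm_berg_le hε fun w ↦ (h z hz w).trans_eq ?_).trans
    (mul_le_mul_of_nonneg_right (le_max_right _ _) (Real.exp_pos _).le)
  rw [mul_add, ← sub_sub]

lemma integrable_bergIntegrand (hc : 0 < c) {z : Fin n → ℂ}
    (hΨ : ∀ w, 2 * (Ψ z (star w)).re ≤ Φt z + Φ w - c * eSq (z - κ w))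
    (hΨm : AEStronglyMeasurable fun w ↦ Ψ z (star w)) (hΦm : AEStronglyMeasurable Φ)
    (hum : AEStronglyMeasurable u) (hu : HasSubgaussianExcess Φ u) :
    Integrable (bergIntegrand Ψ Φ u z) := by
  obtain ⟨ε, hε, hcoer⟩ := exists_mul_eSq_add_le_add_eSq_left κ hc one_pos
  obtain ⟨A, hA, huA⟩ := hu (ε / 2) (half_pos hε)
  refine ((integrable_exp_neg_mul_eSq (half_pos hε)).const_mul
    (A * Real.exp (Φt z + eSq z))).mono' ?_ (.of_forall fun w ↦ ?_)
  · have h_exp : AEStronglyMeasurable fun w ↦ Real.exp (-2 * Φ w) :=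
      Real.continuous_exp.comp_aestronglyMeasurable (hΦm.const_mul _)
    exact ((Complex.continuous_exp.comp_aestronglyMeasurable (hΨm.const_mul 2)).mul hum).mul
      (Complex.continuous_ofReal.comp_aestronglyMeasurable h_exp)
  · refine (norm_bergIntegrand_le (hΨ w) (huA w)).trans ?_
    rw [mul_assoc, ← Real.exp_add]
    gcongr A * Real.exp ?_
    linarith [hcoer z w, mul_nonneg hε.le (eSq_nonneg z)]

theorem wf_berg_subset_setOf_le (hΦ : IsRQuad Φ) (hΦt : IsRQuad Φt) (hc : 0 < c)
    (hΨ : ∀ z w, 2 * (Ψ z (star w)).re ≤ Φt z + Φ w - c * eSq (z - κ w))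
    (hu : HasSubgaussianExcess Φ u) :
    wf Φ (berg a Ψ Φ u) ⊆ {z | Φ z ≤ Φt z} := by
  intro z₀ hz₀
  by_contra h_mem
  have h_lt : Φt z₀ < Φ z₀ := not_le.mp h_mem
  obtain ⟨δ, hδ, hδz₀⟩ := exists_pos_mul_lt (sub_pos.mpr h_lt) (eSq z₀)
  obtain ⟨ε, hε, hcoer⟩ := exists_mul_eSq_add_le_add_eSq_left κ hc hδ
  obtain ⟨A, hA, huA⟩ := hu (ε / 2) (half_pos hε)
  refine notMem_wf_berg_of_norm_bergIntegrand_le (A := A)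
    (V := {z | δ * eSq z < Φ z - Φt z})
    (isOpen_lt (continuous_eSq.const_mul δ) (hΦ.continuous.sub hΦt.continuous)) ?_ ?_
    (by rwa [Set.mem_ofPred_eq, mul_comm]) (half_pos hε) (fun z hz w ↦ ?_) hz₀
  · intro z hz t ht
    have h_scaled := mul_lt_mul_of_pos_left hz (pow_pos ht 2)
    rw [Set.mem_ofPred_eq, eSq_smul, hΦ.map_smul, hΦt.map_smul]
    linarith
  · simp [eSq_zero, hΦ.map_zero, hΦt.map_zero]
  · refine (norm_bergIntegrand_le (hΨ z w) (huA w)).trans ?_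
    gcongr A * Real.exp ?_
    rw [Set.mem_ofPred_eq] at hz
    linarith [hcoer z w, mul_nonneg hε.le (eSq_nonneg z)]

theorem wf_berg_subset_image (hle : ∀ z, Φt z ≤ Φ z) (hc : 0 < c)
    (hΨ : ∀ z w, 2 * (Ψ z (star w)).re ≤ Φt z + Φ w - c * eSq (z - κ w))
    (hu : HasSubgaussianExcess Φ u) :
    wf Φ (berg a Ψ Φ u) ⊆ κ '' wf Φ u := by
  intro z₀ hz₀
  refine ⟨κ.symm z₀, ⟨by simpa using hz₀.1, ?_⟩, κ.apply_symm_apply z₀⟩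
  rintro ⟨V, hV, hVc, hV0, hz₀V, C', c', hC', hc', huV⟩
  obtain ⟨W, hWV, hW, hWc, hz₀W, ε₁, hε₁, hgap_out⟩ :=
    hVc.exists_isOpen_mul_eSq_add_le_of_notMem κ hV hz₀V hc
  obtain ⟨ε₂, hε₂, hgap_in⟩ := exists_mul_eSq_add_le_add_eSq_right κ.toLinearMap hc hc'
  obtain ⟨A, -, huA⟩ := hu (ε₁ / 2) (half_pos hε₁)
  refine notMem_wf_berg_of_norm_bergIntegrand_le (A := max C' A) (ε := min ε₂ (ε₁ / 2))
    hW hWc (fun h0 ↦ hV0 (by simpa using hWV h0)) hz₀W (by positivity) (fun z hz w ↦ ?_) hz₀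
  have h_sum : 0 ≤ eSq z + eSq w := add_nonneg (eSq_nonneg z) (eSq_nonneg w)
  by_cases hw : w ∈ V
  · have huw : ‖u w‖ ≤ C' * Real.exp (Φ w + -(c' * eSq w)) := by
      simpa only [← sub_eq_add_neg] using huV w hw
    refine (norm_bergIntegrand_le (hΨ z w) huw).trans ?_
    gcongr ?_ * Real.exp ?_
    · exact le_max_left _ _
    · have h_min := mul_le_mul_of_nonneg_right (min_le_left ε₂ (ε₁ / 2)) h_sum
      have h_gap : ε₂ * (eSq z + eSq w) ≤ c * eSq (z - κ w) + c' * eSq w := hgap_in z w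
      linarith [hle z]
  · refine (norm_bergIntegrand_le (hΨ z w) (huA w)).trans ?_
    gcongr ?_ * Real.exp ?_
    · exact le_max_right _ _
    · have h_min := mul_le_mul_of_nonneg_right (min_le_right ε₂ (ε₁ / 2)) h_sum
      linarith [hle z, hgap_out z hz w hw, mul_nonneg hε₁.le (eSq_nonneg z)]

theorem stmt_11_general (hΦ : IsRQuad Φ) (hΦt : IsRQuad Φt) (hle : ∀ z, Φt z ≤ Φ z) (hc : 0 < c)
    (hΨ : ∀ z w, 2 * (Ψ z (star w)).re ≤ Φt z + Φ w - c * eSq (z - κ w))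
    (hΨm : ∀ z, AEStronglyMeasurable fun w ↦ Ψ z (star w))
    (hum : AEStronglyMeasurable u) (hu : HasSubgaussianExcess Φ u) :
    (∀ z, Integrable (bergIntegrand Ψ Φ u z)) ∧
      wf Φ (berg a Ψ Φ u) ⊆ (κ '' wf Φ u) ∩ {z | Φ z - Φt z = 0} := by
  refine ⟨fun z ↦ integrable_bergIntegrand hc (hΨ z) (hΨm z)
    hΦ.continuous.aestronglyMeasurable hum hu, fun z hz ↦ ⟨?_, ?_⟩⟩
  · exact wf_berg_subset_image hle hc hΨ hu hz
  · exact sub_eq_zero.mpr ((wf_berg_subset_setOf_le hΦ hΦt hc hΨ hu hz).antisymm (hle z))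

end Bergman

/-- Under the same Bergman-form hypotheses as Statements 9 and 10,
`WF^{1/2}_Φ(Gu) ⊆ κ♭(WF^{1/2}_Φ(u)) ∩ Rad(Φ − Φ̃)`, where
`Rad(Φ − Φ̃) = {z : Φ(z) − Φ̃(z) = 0}`. -/
theorem stmt_11 (n : ℕ) (hn : 1 ≤ n) (Φ Φt : (Fin n → ℂ) → ℝ)
    (hΦ : IsSPSH Φ) (hΦt : IsSPSH Φt) (hle : ∀ z, Φt z ≤ Φ z)
    (κ : (Fin n → ℂ) ≃ₗ[ℝ] (Fin n → ℂ)) (a : ℂ)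
    (Ψ : (Fin n → ℂ) → (Fin n → ℂ) → ℂ) (hΨ : IsCQuad2 Ψ)
    (R : (Fin n → ℂ) → (Fin n → ℂ) → ℝ) (hRq : IsRQuadPair R)
    (hR0 : ∀ z w, 0 ≤ R z w)
    (hre : ∀ z w : Fin n → ℂ, 2 * (Ψ z (star w)).re = Φt z + Φ w - R z w)
    (C c : ℝ) (hC : 0 < C) (hc : 0 < c)
    (hsand : ∀ z w : Fin n → ℂ, c * eSq (z - κ w) ≤ R z w ∧ R z w ≤ C * eSq (z - κ w))
    (u : (Fin n → ℂ) → ℂ) (hu : Differentiable ℂ u)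
    (C₀ N : ℝ) (hC₀ : 0 < C₀)
    (hg : ∀ w : Fin n → ℂ, ‖u w‖ ≤ C₀ * jb w ^ N * Real.exp (Φ w)) :
    wf Φ (berg a Ψ Φ u) ⊆
      ((fun w => κ w) '' wf Φ u) ∩ {z : Fin n → ℂ | Φ z - Φt z = 0} := by
  have hΨ_re (z w : Fin n → ℂ) :
      2 * (Ψ z (star w)).re ≤ Φt z + Φ w - c * eSq (z - κ w) := by
    linarith [hre z w, (hsand z w).1]
  have hΨ_meas (z : Fin n → ℂ) : AEStronglyMeasurable fun w ↦ Ψ z (star w) :=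
    (hΨ.continuous.comp (by fun_prop : Continuous fun w ↦ (z, star w))).aestronglyMeasurable
  exact (stmt_11_general hΦ.1 hΦt.1 hle hc hΨ_re hΨ_meas hu.continuous.aestronglyMeasurable
    (.of_norm_le_jb_rpow hC₀ hg)).2
end
end
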